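/- arXiv:1501.04513 — 2 statements merged into one kernel-verified Lean document; each statement's English description precedes it below -/
import Mathlib

section
/- Let φ be a Young function. If f, g : ℝ^N → [0, ∞] are Borel measurable and sup f = sup g (possibly ∞), then f⊼g is Lebesgue measurable and max{‖f‖_φ, ‖g‖_φ} ≤ ‖f⊼g‖_φ. -/
open MeasureTheory Filter Set
open scoped ENNReal NNReal Pointwise

noncomputable section

/-- `ℝ^N` with the Euclidean structure and Lebesgue measure. -/
abbrev ES (N : ℕ) := EuclideanSpace ℝ (Fin N)

variable {N : ℕ}

/-- The operation `(f ⊼ g)(x) = sup_y min (f (x - y)) (g y)` for extended-real valued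
functions. -/
def supMinE (f g : ES N → EReal) (x : ES N) : EReal := ⨆ y, min (f (x - y)) (g y)

/-- The operation `(f ⊻ g)(x) = inf_y max (f (x - y)) (g y)` for extended-real valued
functions. -/
def infMaxE (f g : ES N → EReal) (x : ES N) : EReal := ⨅ y, max (f (x - y)) (g y)

/-- The infimal convolution `(f □ g)(x) = inf_y (f (x - y) + g y)`. -/
def infConvE (f g : ES N → EReal) (x : ES N) : EReal := ⨅ y, (f (x - y) + g y)

/-- The operation `(f ⊼ g)(x) = sup_y min (f (x - y)) (g y)` for `[0,∞]`-valued functions. -/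
def supMin (f g : ES N → ℝ≥0∞) (x : ES N) : ℝ≥0∞ := ⨆ y, min (f (x - y)) (g y)

/-- A Young function: a nonconstant, nondecreasing, convex, left-continuous
`φ : [0,∞] → [0,∞]` with `φ 0 = 0`. -/
structure IsYoungFunction (φ : ℝ≥0∞ → ℝ≥0∞) : Prop where
  nonconstant : ∃ x y, φ x ≠ φ y
  map_zero : φ 0 = 0
  mono : Monotone φ
  convex : ∀ ⦃a b x y : ℝ≥0∞⦄, a + b = 1 → φ (a * x + b * y) ≤ a * φ x + b * φ y
  left_continuous : ∀ x, ContinuousWithinAt φ (Set.Iio x) x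

/-- The Luxemburg norm `‖h‖_φ = inf {r > 0 | ∫ φ (r⁻¹ |h|) ≤ 1}` (`= ∞` if no such `r`),
for a nonnegative function `h`. -/
def luxNorm (φ : ℝ≥0∞ → ℝ≥0∞) (h : ES N → ℝ≥0∞) : ℝ≥0∞ :=
  sInf {r : ℝ≥0∞ | 0 < r ∧ ∫⁻ x, φ (r⁻¹ * h x) ≤ 1}

/-- The nonnegative part of an extended real, as an element of `[0,∞]`. -/
def toENN (a : EReal) : ℝ≥0∞ := if a = ⊤ then ⊤ else ENNReal.ofReal a.toReal

/-- The reciprocal `1/a ∈ [0,∞]` of an extended real (intended for `a ≥ 0`), with the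
conventions `1/0 = ∞` and `1/∞ = 0`. -/
def eInv (a : EReal) : ℝ≥0∞ := (toENN a)⁻¹

/-- The enclosing radius of a set `X ⊆ ℝ^N`: the infimum of the radii of closed balls
containing `X` (`0` for `X = ∅`, `∞` if `X` is unbounded). -/
def encRadius (X : Set (ES N)) : ℝ≥0∞ := sInf {r : ℝ≥0∞ | ∃ c : ES N, ∀ x ∈ X, edist x c ≤ r}

/-- The transform `f̂(x) = γ_f^+(|x|)` where `γ_f^+(t) = inf {ξ | ρ_f^+(ξ) ≤ t}` and
`ρ_f^+(ξ)` is the enclosing radius of the upper level set `{f > ξ}`. -/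
def hatE (f : ES N → EReal) (x : ES N) : EReal :=
  sInf {ξ : EReal | encRadius {y | ξ < f y} ≤ (‖x‖₊ : ℝ≥0∞)}

/-- The lower transform `f̌ = -((-f)^)`. -/
def checkE (f : ES N → EReal) (x : ES N) : EReal := - hatE (fun y => - f y) x

/-- The transform `f̂` for `[0,∞]`-valued functions. -/
def hatT (f : ES N → ℝ≥0∞) (x : ES N) : ℝ≥0∞ :=
  sInf {ξ : ℝ≥0∞ | encRadius {y | ξ < f y} ≤ (‖x‖₊ : ℝ≥0∞)}

/-- The lower transform `f̌(x) = γ_f^-(|x|)`, `γ_f^-(t) = sup {ξ | ρ({f < ξ}) ≤ t}`,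
for `[0,∞]`-valued functions. -/
def checkT (f : ES N → ℝ≥0∞) (x : ES N) : ℝ≥0∞ :=
  sSup {ξ : ℝ≥0∞ | encRadius {y | f y < ξ} ≤ (‖x‖₊ : ℝ≥0∞)}

/-- The `L^p` "norm" (`p ∈ [1,∞]`, essential supremum when `p = ∞`) of a `[0,∞]`-valued
function. -/
def pNorm (p : ℝ≥0∞) (h : ES N → ℝ≥0∞) : ℝ≥0∞ :=
  if p = ∞ then essSup h volume else (∫⁻ x, h x ^ p.toReal) ^ (1 / p.toReal)

/-!
The superlevel sets of `f ⊼ g` are the Minkowski sums `{f > a} + {g > a}`. These need not be Borel,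
but they are continuous images of Borel sets, hence analytic, and analytic sets are measurable for
the completion of every s-finite Borel measure: Choquet's capacitability argument exhausts them by
compact sets.

For the norm inequality, choose points `yₙ` along which `g (yₙ)` increases to `sup g = sup f`. Then
`min (f x) (g yₙ) ≤ (f ⊼ g) (x + yₙ)` and the left-hand side increases to `f x`, so translation
invariance of Lebesgue measure and monotone convergence give `∫ φ (f / r) ≤ ∫ φ ((f ⊼ g) / r)`.
-/

section Capacitability

variable {α : Type*} [MeasurableSpace α] {μ : Measure α} {c : ℝ≥0∞}

lemma exists_lt_measure_image_inter_apply_le {ι : Type*} {f : (ι → ℕ) → α} {s : Set (ι → ℕ)}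
    (hc : c < μ (f '' s)) (i : ι) : ∃ m, c < μ (f '' (s ∩ {x | x i ≤ m})) := by
  have hmono : Monotone fun m : ℕ => f '' (s ∩ {x | x i ≤ m}) := fun a b hab =>
    image_mono (inter_subset_inter_right _ fun x (hx : x i ≤ a) => hx.trans hab)
  have hunion : ⋃ m : ℕ, f '' (s ∩ {x | x i ≤ m}) = f '' s := by
    rw [← image_iUnion, ← inter_iUnion, iUnion_eq_univ_iff.2 fun x => ⟨x i, le_refl (x i)⟩,
      inter_univ]
  rwa [← hunion, hmono.measure_iUnion, lt_iSup_iff] at hc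

lemma exists_forall_lt_measure_image_forall_lt_le {f : (ℕ → ℕ) → α} (hc : c < μ (range f)) :
    ∃ n : ℕ → ℕ, ∀ k, c < μ (f '' {x | ∀ i < k, x i ≤ n i}) := by
  choose m hm using fun (k : ℕ) (S : {S : Set (ℕ → ℕ) // c < μ (f '' S)}) =>
    exists_lt_measure_image_inter_apply_le S.2 k
  let T : ℕ → {S : Set (ℕ → ℕ) // c < μ (f '' S)} :=
    Nat.rec ⟨univ, by rwa [image_univ]⟩ fun k S => ⟨S.1 ∩ {x | x k ≤ m k S}, hm k S⟩
  have hT (k : ℕ) : (T k).1 = {x | ∀ i < k, x i ≤ m i (T i)} := by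
    induction k with
    | zero => ext x; simp [T]
    | succ k ih =>
      change (T k).1 ∩ {x | x k ≤ m k (T k)} = _
      rw [ih]
      ext x
      exact Nat.forall_lt_succ_right.symm
  exact ⟨fun i => m i (T i), fun k => hT k ▸ (T k).2⟩

lemma isCompact_pi_Iic_nat {ι : Type*} (n : ι → ℕ) :
    IsCompact (univ.pi fun i => Set.Iic (n i)) :=
  isCompact_univ_pi fun i => (Set.finite_Iic (n i)).isCompact

lemma exists_setOf_forall_lt_le_subset_of_pi_Iic_subset {n : ℕ → ℕ} {U : Set (ℕ → ℕ)}
    (hU : IsOpen U) (hn : univ.pi (fun i => Set.Iic (n i)) ⊆ U) :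
    ∃ k, {x : ℕ → ℕ | ∀ i < k, x i ≤ n i} ⊆ U := by
  -- Points `xₖ ∉ U` with `xₖ i ≤ n i` for `i < k` agree on the first `k` entries with their
  -- truncations `min xₖ n`, and these accumulate inside the compact box.
  by_contra! h
  simp only [Set.not_subset] at h
  choose x hx hxU using h
  obtain ⟨y, hy, ψ, hψ, hlim⟩ :=
    (isCompact_pi_Iic_nat n).tendsto_subseq (x := fun k i => min (x k i) (n i))
      (fun k i _ => mem_Iic.2 (min_le_right _ _))
  have hxlim : Tendsto (fun k => x (ψ k)) atTop (nhds y) := by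
    rw [tendsto_pi_nhds] at hlim ⊢
    intro i
    refine (hlim i).congr' ?_
    filter_upwards [eventually_gt_atTop i] with k hk
    exact min_eq_left (hx (ψ k) i (hk.trans_le (hψ.id_le k)))
  obtain ⟨k, hk⟩ := (hxlim.eventually (hU.mem_nhds (hn hy))).exists
  exact hxU _ hk

lemma exists_isCompact_le_measure_of_analyticSet [TopologicalSpace α] [μ.OuterRegular]
    {s : Set α} (hs : AnalyticSet s) (hc : c < μ s) : ∃ K ⊆ s, IsCompact K ∧ c ≤ μ K := by
  rw [AnalyticSet] at hs
  rcases hs with rfl | ⟨f, hf, rfl⟩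
  · simp at hc
  obtain ⟨n, hn⟩ := exists_forall_lt_measure_image_forall_lt_le hc
  refine ⟨f '' univ.pi fun i => Set.Iic (n i), image_subset_range _ _,
    (isCompact_pi_Iic_nat n).image hf, ?_⟩
  rw [Set.measure_eq_iInf_isOpen]
  refine le_iInf₂ fun U hU => le_iInf fun hUo => ?_
  obtain ⟨k, hk⟩ := exists_setOf_forall_lt_le_subset_of_pi_Iic_subset (hUo.preimage hf)
    (image_subset_iff.1 hU)
  exact (hn k).le.trans (measure_mono (image_subset_iff.2 hk))

lemma nullMeasurableSet_of_forall_lt_exists_subset_le {s : Set α} (hs : μ s ≠ ∞)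
    (h : ∀ c < μ s, ∃ t ⊆ s, NullMeasurableSet t μ ∧ c ≤ μ t) : NullMeasurableSet s μ := by
  rcases eq_or_ne (μ s) 0 with h0 | h0
  · exact .of_null h0
  obtain ⟨u, -, hu, hlim⟩ := exists_seq_strictMono_tendsto' (pos_iff_ne_zero.2 h0)
  choose t hts ht hut using fun n => h (u n) (hu n).2
  have hμ : μ s ≤ μ (⋃ n, t n) :=
    le_of_tendsto' hlim fun n => (hut n).trans (measure_mono (subset_iUnion t n))
  have hmeas : NullMeasurableSet (⋃ n, t n) μ := .iUnion ht
  exact hmeas.congr (ae_eq_of_subset_of_measure_ge (iUnion_subset hts) hμ hmeas hs)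

lemma nullMeasurableSet_of_analyticSet [TopologicalSpace α] [TopologicalSpace.MetrizableSpace α]
    [BorelSpace α] [SFinite μ] {s : Set α} (hs : AnalyticSet s) : NullMeasurableSet s μ := by
  let := TopologicalSpace.metrizableSpaceMetric α
  refine .mono_ac ?_ (absolutelyContinuous_toFinite μ)
  refine nullMeasurableSet_of_forall_lt_exists_subset_le (measure_ne_top _ _) fun c hc => ?_
  obtain ⟨K, hKs, hK, hcK⟩ := exists_isCompact_le_measure_of_analyticSet hs hc
  exact ⟨K, hKs, hK.measurableSet.nullMeasurableSet, hcK⟩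

end Capacitability

lemma map_iSup_of_continuousWithinAt_Iio {α β ι : Type*} [CompleteLinearOrder α]
    [TopologicalSpace α] [OrderTopology α] [CompleteLinearOrder β] [TopologicalSpace β]
    [OrderClosedTopology β] [Nonempty ι] {φ : α → β} (hφ : Monotone φ) {u : ι → α}
    (hc : ContinuousWithinAt φ (Set.Iio (⨆ i, u i)) (⨆ i, u i)) :
    φ (⨆ i, u i) = ⨆ i, φ (u i) := by
  have hrange : ContinuousWithinAt φ (range u) (sSup (range u)) :=
    (continuousWithinAt_Iio_iff_Iic.1 hc).mono (range_subset_iff.2 (le_iSup u))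
  rw [iSup, (hφ.monotoneOn _).map_csSup_of_continuousWithinAt hrange (range_nonempty u), iSup,
    ← range_comp, Function.comp_def]

lemma exists_monotone_comp_iSup_eq {α ι : Type*} [CompleteLinearOrder α] [TopologicalSpace α]
    [OrderTopology α] [FirstCountableTopology α] [Nonempty ι] (g : ι → α) :
    ∃ y : ℕ → ι, Monotone (g ∘ y) ∧ ⨆ n, g (y n) = ⨆ i, g i := by
  obtain ⟨u, hu, hlim, hmem⟩ :=
    exists_seq_tendsto_sSup (range_nonempty g) (OrderTop.bddAbove _)
  choose y hy using hmem
  obtain rfl : g ∘ y = u := funext hy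
  exact ⟨y, hu, tendsto_nhds_unique (tendsto_atTop_iSup hu) hlim⟩

lemma supMin_comm (f g : ES N → ℝ≥0∞) : supMin f g = supMin g f := by
  funext x
  refine (Equiv.subLeft x).iSup_congr fun y => ?_
  simp [min_comm]

lemma min_le_supMin_add (f g : ES N → ℝ≥0∞) (x y : ES N) :
    min (f x) (g y) ≤ supMin f g (x + y) := by
  simpa [supMin] using le_iSup (fun z => min (f (x + y - z)) (g z)) y

lemma mul_supMin (c : ℝ≥0∞) (f g : ES N → ℝ≥0∞) (x : ES N) :
    c * supMin f g x = supMin (fun y => c * f y) (fun y => c * g y) x := by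
  simp only [supMin, ENNReal.mul_iSup, mul_min]

lemma setOf_lt_supMin (f g : ES N → ℝ≥0∞) (a : ℝ≥0∞) :
    {x | a < supMin f g x} = {x | a < f x} + {x | a < g x} := by
  ext x
  simp only [supMin, mem_ofPred_eq, lt_iSup_iff, lt_min_iff, Set.mem_add]
  constructor
  · rintro ⟨y, hy⟩
    exact ⟨x - y, hy.1, y, hy.2, sub_add_cancel x y⟩
  · rintro ⟨z, hz, y, hy, rfl⟩
    exact ⟨y, by simpa using hz, hy⟩

lemma aemeasurable_supMin {f g : ES N → ℝ≥0∞} {μ : Measure (ES N)} [SFinite μ]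
    (hf : Measurable f) (hg : Measurable g) : AEMeasurable (supMin f g) μ := by
  refine NullMeasurable.aemeasurable ?_
  refine @measurable_of_Ioi _ (NullMeasurableSpace (ES N) μ) _ _ _ _ _ _ _ _ fun a => ?_
  change NullMeasurableSet {x | a < supMin f g x} μ
  rw [setOf_lt_supMin, ← add_image_prod]
  exact nullMeasurableSet_of_analyticSet <| ((measurableSet_lt measurable_const hf).prod
    (measurableSet_lt measurable_const hg)).analyticSet.image_of_continuous continuous_add

lemma lintegral_comp_le_lintegral_comp_supMin {φ : ℝ≥0∞ → ℝ≥0∞} (hφ : Monotone φ)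
    (hφc : ∀ t, ContinuousWithinAt φ (Set.Iio t) t) {μ : Measure (ES N)} [μ.IsAddRightInvariant]
    {f g : ES N → ℝ≥0∞} (hf : AEMeasurable f μ) (hsup : (⨆ x, f x) ≤ ⨆ x, g x) :
    ∫⁻ x, φ (f x) ∂μ ≤ ∫⁻ x, φ (supMin f g x) ∂μ := by
  obtain ⟨y, hy, hgy⟩ := exists_monotone_comp_iSup_eq g
  have hlim (x : ES N) : φ (f x) = ⨆ n, φ (min (f x) (g (y n))) := by
    have hfx : ⨆ n, min (f x) (g (y n)) = f x := by
      rw [← inf_iSup_eq, hgy, inf_eq_left.2 ((le_iSup f x).trans hsup)]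
    rw [← map_iSup_of_continuousWithinAt_Iio hφ (hφc _), hfx]
  calc ∫⁻ x, φ (f x) ∂μ = ∫⁻ x, ⨆ n, φ (min (f x) (g (y n))) ∂μ := lintegral_congr hlim
    _ = ⨆ n, ∫⁻ x, φ (min (f x) (g (y n))) ∂μ :=
      lintegral_iSup' (fun n => hφ.measurable.comp_aemeasurable (hf.min aemeasurable_const))
        (.of_forall fun x _ _ hmn => hφ (min_le_min_left _ (hy hmn)))
    _ ≤ ⨆ n, ∫⁻ x, φ (supMin f g (x + y n)) ∂μ :=
      iSup_mono fun n => lintegral_mono fun x => hφ (min_le_supMin_add f g x (y n))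
    _ = ∫⁻ x, φ (supMin f g x) ∂μ := by
      simp only [lintegral_add_right_eq_self fun x => φ (supMin f g x), ciSup_const]

lemma luxNorm_le_luxNorm_supMin {φ : ℝ≥0∞ → ℝ≥0∞} (hφ : Monotone φ)
    (hφc : ∀ t, ContinuousWithinAt φ (Set.Iio t) t) {f g : ES N → ℝ≥0∞}
    (hf : AEMeasurable f volume) (hsup : (⨆ x, f x) ≤ ⨆ x, g x) :
    luxNorm φ f ≤ luxNorm φ (supMin f g) := by
  refine sInf_le_sInf fun r ⟨hr, hfg⟩ => ⟨hr, le_trans ?_ hfg⟩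
  simp only [mul_supMin]
  refine lintegral_comp_le_lintegral_comp_supMin hφ hφc (hf.const_mul _) ?_
  simpa only [ENNReal.mul_iSup] using mul_le_mul_right hsup r⁻¹

theorem max_luxNorm_le_luxNorm_supMin_general {φ : ℝ≥0∞ → ℝ≥0∞} (hφ : Monotone φ)
    (hφc : ∀ t, ContinuousWithinAt φ (Set.Iio t) t) {f g : ES N → ℝ≥0∞}
    (hf : Measurable f) (hg : Measurable g) (hsup : (⨆ x, f x) = ⨆ x, g x) :
    AEMeasurable (supMin f g) (volume : Measure (ES N)) ∧
      max (luxNorm φ f) (luxNorm φ g) ≤ luxNorm φ (supMin f g) := by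
  refine ⟨aemeasurable_supMin hf hg, max_le ?_ ?_⟩
  · exact luxNorm_le_luxNorm_supMin hφ hφc hf.aemeasurable hsup.le
  · rw [supMin_comm]
    exact luxNorm_le_luxNorm_supMin hφ hφc hg.aemeasurable hsup.ge

theorem max_luxNorm_le_luxNorm_supMin {N : ℕ} (hN : 0 < N)
    (φ : ℝ≥0∞ → ℝ≥0∞) (hφ : IsYoungFunction φ)
    (f g : ES N → ℝ≥0∞) (hf : Measurable f) (hg : Measurable g)
    (hsup : (⨆ x, f x) = ⨆ x, g x) :
    AEMeasurable (supMin f g) (volume : Measure (ES N)) ∧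
      max (luxNorm φ f) (luxNorm φ g) ≤ luxNorm φ (supMin f g) :=
  max_luxNorm_le_luxNorm_supMin_general hφ.mono hφ.left_continuous hf hg hsup

end
end

section
/- If φ is a Young function and f : ℝ^N → [0, ∞], then the transform of the composition equals the composition with the transform: (φ∘f)^ = φ∘f̂ as functions on ℝ^N. -/
open MeasureTheory Filter Set
open scoped ENNReal NNReal Pointwise

noncomputable section

variable {N : ℕ}

/-!
A nondecreasing left-continuous `φ` with `φ 0 = 0` preserves suprema, hence has an upper adjoint
`ψ`: `φ a ≤ ξ ↔ a ≤ ψ ξ`. The upper level set `{φ ∘ f > ξ}` is therefore `{f > ψ ξ}`. Since the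
infimum defining the transform is attained, `f̂(x) ≤ ξ ↔ ρ({f > ξ}) ≤ |x|`, and so

`(φ ∘ f)^(x) ≤ ξ ↔ ρ({f > ψ ξ}) ≤ |x| ↔ f̂(x) ≤ ψ ξ ↔ φ (f̂(x)) ≤ ξ`.

Attainment holds because `{f > f̂(x)}` is the directed union of the `{f > ξ}` over all `ξ` with
`ρ({f > ξ}) ≤ |x|`, and, closed balls being compact, `ρ` commutes with directed unions.
-/

theorem nonempty_iInter_closedEBall_of_forall_finset {α ι : Type*} [PseudoMetricSpace α]
    [ProperSpace α] [Nonempty α] {a : ι → α} {r : ι → ℝ≥0∞}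
    (h : ∀ u : Finset ι, (⋂ i ∈ u, Metric.closedEBall (a i) (r i)).Nonempty) :
    (⋂ i, Metric.closedEBall (a i) (r i)).Nonempty := by
  classical
  by_cases hr : ∀ i, r i = ∞
  · simp only [hr, Metric.closedEBall_top, iInter_univ, univ_nonempty]
  · obtain ⟨j, hj⟩ := not_forall.1 hr
    have hcompact : IsCompact (Metric.closedEBall (a j) (r j)) := by
      rw [← ENNReal.coe_toNNReal hj, Metric.closedEBall_coe]
      exact isCompact_closedBall _ _
    refine (hcompact.inter_iInter_nonempty _ (fun _ => Metric.isClosed_closedEBall)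
      fun u => ?_).mono inter_subset_right
    simpa only [Finset.set_biInter_insert] using h (insert j u)

theorem encRadius_mono {X Y : Set (ES N)} (h : X ⊆ Y) : encRadius X ≤ encRadius Y :=
  sInf_le_sInf fun _ ⟨c, hc⟩ => ⟨c, fun x hx => hc x (h hx)⟩

theorem encRadius_lt_iff {X : Set (ES N)} {t : ℝ≥0∞} :
    encRadius X < t ↔ ∃ r < t, ∃ c, X ⊆ Metric.closedEBall c r := by
  simp only [encRadius, sInf_lt_iff, mem_ofPred_eq, subset_def, Metric.mem_closedEBall, and_comm]

theorem exists_subset_closedEBall_encRadius (X : Set (ES N)) :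
    ∃ c, X ⊆ Metric.closedEBall c (encRadius X) := by
  have hcommon : (⋂ p : X × Ioi (encRadius X),
      Metric.closedEBall (p.1 : ES N) (p.2 : ℝ≥0∞)).Nonempty := by
    refine nonempty_iInter_closedEBall_of_forall_finset fun u => ?_
    rcases u.eq_empty_or_nonempty with rfl | hu
    · simp only [Finset.notMem_empty, iInter_of_empty, iInter_univ, univ_nonempty]
    · obtain ⟨q, -, hq⟩ := u.exists_min_image (fun p => (p.2 : ℝ≥0∞)) hu
      obtain ⟨r, hr, c, hc⟩ := encRadius_lt_iff.1 q.2.2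
      exact ⟨c, mem_iInter₂.2 fun p hp =>
        Metric.mem_closedEBall'.2 ((hc p.1.2).trans (hr.le.trans (hq p hp)))⟩
  obtain ⟨c, hc⟩ := hcommon
  exact ⟨c, fun x hx => le_of_forall_gt_imp_ge_of_dense fun r hr =>
    Metric.mem_closedEBall'.1 (mem_iInter.1 hc (⟨x, hx⟩, ⟨r, hr⟩))⟩

theorem encRadius_le_iff {X : Set (ES N)} {t : ℝ≥0∞} :
    encRadius X ≤ t ↔ ∃ c, X ⊆ Metric.closedEBall c t := by
  refine ⟨fun h => ?_, fun ⟨c, hc⟩ => sInf_le ⟨c, hc⟩⟩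
  obtain ⟨c, hc⟩ := exists_subset_closedEBall_encRadius X
  exact ⟨c, hc.trans (Metric.closedEBall_subset_closedEBall h)⟩

theorem encRadius_iUnion_of_directed {ι : Type*} [Nonempty ι] {X : ι → Set (ES N)}
    (hX : Directed (· ⊆ ·) X) : encRadius (⋃ i, X i) = ⨆ i, encRadius (X i) := by
  refine le_antisymm ?_ (iSup_le fun i => encRadius_mono (subset_iUnion X i))
  set t := ⨆ i, encRadius (X i)
  have hcommon : (⋂ y : ⋃ i, X i, Metric.closedEBall (y : ES N) t).Nonempty := by
    refine nonempty_iInter_closedEBall_of_forall_finset fun u => ?_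
    obtain ⟨i, hi⟩ : ∃ i, (u.map (Function.Embedding.subtype _) : Set (ES N)) ⊆ X i :=
      Directed.exists_mem_subset_of_finset_subset_biUnion hX u.map_subtype_subset
    obtain ⟨c, hc⟩ := encRadius_le_iff.1 (le_iSup (fun i => encRadius (X i)) i)
    exact ⟨c, mem_iInter₂.2 fun y hy =>
      Metric.mem_closedEBall_comm.1 (hc (hi (Finset.mem_map_of_mem _ hy)))⟩
  obtain ⟨c, hc⟩ := hcommon
  exact encRadius_le_iff.2 ⟨c, fun y hy => Metric.mem_closedEBall_comm.1 (mem_iInter.1 hc ⟨y, hy⟩)⟩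

theorem encRadius_setOf_hatT_lt_le (f : ES N → ℝ≥0∞) (x : ES N) :
    encRadius {y | hatT f x < f y} ≤ ‖x‖₊ := by
  let S : Set ℝ≥0∞ := {ξ | encRadius {y | ξ < f y} ≤ ‖x‖₊}
  have hS : Nonempty S := ⟨∞, by simp [S, encRadius]⟩
  have hanti : Antitone fun ξ : S => {y | (ξ : ℝ≥0∞) < f y} := fun _ _ h _ hy =>
    lt_of_le_of_lt (Subtype.coe_le_coe.2 h) hy
  have hunion : {y | hatT f x < f y} = ⋃ ξ : S, {y | (ξ : ℝ≥0∞) < f y} := by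
    ext y
    simp only [hatT, mem_ofPred_eq, sInf_lt_iff, mem_iUnion, Subtype.exists, exists_prop, S]
  rw [hunion, encRadius_iUnion_of_directed hanti.directed_le]
  exact iSup_le Subtype.prop

theorem hatT_le_iff {f : ES N → ℝ≥0∞} {x : ES N} {ξ : ℝ≥0∞} :
    hatT f x ≤ ξ ↔ encRadius {y | ξ < f y} ≤ ‖x‖₊ :=
  ⟨fun h => (encRadius_mono fun _ hy => h.trans_lt hy).trans (encRadius_setOf_hatT_lt_le f x),
    fun h => sInf_le h⟩

theorem hatT_comp_of_galoisConnection {φ ψ : ℝ≥0∞ → ℝ≥0∞} (h : GaloisConnection φ ψ)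
    (f : ES N → ℝ≥0∞) (x : ES N) : hatT (fun y => φ (f y)) x = φ (hatT f x) := by
  refine eq_of_forall_ge_iff fun ξ => ?_
  have hlevel : {y | ξ < φ (f y)} = {y | ψ ξ < f y} := by
    ext y
    exact h.lt_iff_lt
  rw [hatT_le_iff, hlevel, ← hatT_le_iff, ← h.le_iff_le]

theorem galoisConnection_of_continuousWithinAt_Iio {α β : Type*}
    [CompleteLinearOrder α] [TopologicalSpace α] [OrderTopology α]
    [CompleteLinearOrder β] [TopologicalSpace β] [OrderClosedTopology β] {φ : α → β}
    (hmono : Monotone φ) (hbot : φ ⊥ = ⊥) (hleft : ∀ a, ContinuousWithinAt φ (Iio a) a) :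
    GaloisConnection φ fun b => sSup {a | φ a ≤ b} := by
  refine fun a b => ⟨fun h => le_sSup h, fun h => (hmono h).trans ?_⟩
  have hcont : ContinuousWithinAt φ {a | φ a ≤ b} (sSup {a | φ a ≤ b}) :=
    (continuousWithinAt_Iio_iff_Iic.1 (hleft _)).mono fun _ => le_sSup
  rw [(hmono.monotoneOn _).map_sSup_of_continuousWithinAt hcont hbot]
  exact sSup_le (forall_mem_image.2 fun _ => id)

theorem hatT_comp_young_general {φ : ℝ≥0∞ → ℝ≥0∞} (hmono : Monotone φ) (hzero : φ 0 = 0)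
    (hleft : ∀ a, ContinuousWithinAt φ (Iio a) a) (f : ES N → ℝ≥0∞) :
    hatT (fun x => φ (f x)) = fun x => φ (hatT f x) :=
  funext <| hatT_comp_of_galoisConnection
    (galoisConnection_of_continuousWithinAt_Iio hmono hzero hleft) f

theorem hatT_comp_young {N : ℕ} (φ : ℝ≥0∞ → ℝ≥0∞) (hφ : IsYoungFunction φ)
    (f : ES N → ℝ≥0∞) :
    hatT (fun x => φ (f x)) = fun x => φ (hatT f x) :=
  hatT_comp_young_general hφ.mono hφ.map_zero hφ.left_continuous f

end
end
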